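/- Let ρ(t,x) be a classical solution of the PDE ∂_t ρ(t,x) = 2(ρ(t)*ρ(t))(2x) − ρ(t,x) for t ≥ 0 and x ≥ 0, with initial condition ρ(0,·) a probability density on [0,∞) with mean μ > 0 and finite variance. Let V(t) = ∫_{[0,∞)} x² ρ(t,x) dx − μ² denote the variance of ρ(t,·). Then V(t) = V(0) e^{−t/2} for all t ≥ 0. -/

import Mathlib

open MeasureTheory

/-!
Write `f = ρ(t,·)`, extended by zero to the line, and `M = ∫ x² f`. Substituting `z = 2x`, the gain
term contributes `∫ x² · 2 (f * f)(2x) dx = (1/4) ∫ z² (f * f)(z) dz`. Since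
`z² = y² + 2 y (z - y) + (z - y)²`, the function `z² (f * f)(z)` is a.e. a sum of three convolutions
of integrable functions, and the integral of a convolution is the product of the integrals; this
gives `∫ z² (f * f) = 2 M + 2 μ²`. Hence `M' = (M + μ²)/2 - M = -(M - μ²)/2`, and
`(M - μ²) e^{t/2}` is constant.

No integrability of `f` or `x f` is assumed, but it follows from the nonvanishing of their
integrals, as the Bochner integral of a non-integrable function is zero.
-/

open scoped Convolution

/-- The second moment of the self-convolution of `g` in terms of the moments of `g`. -/
theorem second_moment_convolution (g : ℝ → ℝ) (h0 : Integrable g)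
    (h1 : Integrable (fun x => x * g x)) (h2 : Integrable (fun x => x ^ 2 * g x)) :
    ∫ z, z ^ 2 * ∫ y, g y * g (z - y) =
      2 * ((∫ x, x ^ 2 * g x) * ∫ x, g x) + 2 * (∫ x, x * g x) ^ 2 := by
  let L := ContinuousLinearMap.mul ℝ ℝ
  have e1 := h2.ae_convolution_exists L h0
  have e2 := h1.ae_convolution_exists L h1
  have e3 := h0.ae_convolution_exists L h2
  have key : (fun z => z ^ 2 * ∫ y, g y * g (z - y)) =ᵐ[volume] fun z =>
      ((fun x => x ^ 2 * g x) ⋆[L, volume] g) z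
      + 2 * ((fun x => x * g x) ⋆[L, volume] (fun x => x * g x)) z
      + (g ⋆[L, volume] (fun x => x ^ 2 * g x)) z := by
    filter_upwards [e1, e2, e3] with z a1 a2 a3
    simp only [ConvolutionExistsAt, L, ContinuousLinearMap.mul_apply'] at a1 a2 a3
    simp only [convolution_def, L, ContinuousLinearMap.mul_apply']
    have a12 : Integrable (fun y => y ^ 2 * g y * g (z - y)
        + 2 * (y * g y * ((z - y) * g (z - y)))) := a1.add (a2.const_mul 2)
    rw [← integral_const_mul, ← integral_const_mul, ← integral_add a1 (a2.const_mul 2),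
      ← integral_add a12 a3]
    congr 1
    ext y
    ring
  rw [integral_congr_ae key, integral_add, integral_add, integral_const_mul,
    integral_convolution L h2 h0, integral_convolution L h1 h1, integral_convolution L h0 h2]
  · simp only [L, ContinuousLinearMap.mul_apply']
    ring
  · exact h2.integrable_convolution L h0
  · exact (h1.integrable_convolution L h1).const_mul 2
  · exact (h2.integrable_convolution L h0).add ((h1.integrable_convolution L h1).const_mul 2)
  · exact h0.integrable_convolution L h2

/-- For the extension by zero of a function on `[0, ∞)`, the convolution integral over the line
reduces to an integral over `[0, z]`. -/
theorem integral_indicator_mul_indicator (f : ℝ → ℝ) {z : ℝ} (hz : 0 ≤ z) :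
    ∫ y, (Set.Ici 0).indicator f y * (Set.Ici 0).indicator f (z - y) =
      ∫ y in (0 : ℝ)..z, f y * f (z - y) := by
  rw [intervalIntegral.integral_of_le hz, ← integral_Icc_eq_integral_Ioc,
    ← integral_indicator measurableSet_Icc]
  congr 1
  ext y
  simp only [Set.indicator_apply, Set.mem_Ici, Set.mem_Icc, sub_nonneg]
  by_cases a : 0 ≤ y <;> by_cases b : y ≤ z <;> simp [a, b]

theorem integral_indicator_mul_indicator_of_neg (f : ℝ → ℝ) {z : ℝ} (hz : z < 0) :
    ∫ y, (Set.Ici 0).indicator f y * (Set.Ici 0).indicator f (z - y) = 0 := by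
  refine integral_eq_zero_of_ae (.of_forall fun y => ?_)
  simp only [Set.indicator_apply, Set.mem_Ici, sub_nonneg, Pi.zero_apply]
  by_cases a : 0 ≤ y
  · simp [not_le.2 (hz.trans_le a)]
  · simp [a]

/-- The second moment of the gain term of the equation. -/
theorem second_moment_gain (f : ℝ → ℝ) (h0 : IntegrableOn f (Set.Ici 0))
    (h1 : IntegrableOn (fun x => x * f x) (Set.Ici 0))
    (h2 : IntegrableOn (fun x => x ^ 2 * f x) (Set.Ici 0)) :
    ∫ x in Set.Ici (0 : ℝ), x ^ 2 * (2 * ∫ y in (0 : ℝ)..(2 * x), f y * f (2 * x - y)) =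
      (1 / 2) * ((∫ x in Set.Ici (0 : ℝ), x ^ 2 * f x) * (∫ x in Set.Ici (0 : ℝ), f x)
        + (∫ x in Set.Ici (0 : ℝ), x * f x) ^ 2) := by
  set g := (Set.Ici (0 : ℝ)).indicator f with hg
  have i1 : (fun x => x * g x) = (Set.Ici (0 : ℝ)).indicator (fun x => x * f x) := by
    ext x; simp [hg, Set.indicator_apply]
  have i2 : (fun x => x ^ 2 * g x) = (Set.Ici (0 : ℝ)).indicator (fun x => x ^ 2 * f x) := by
    ext x; simp [hg, Set.indicator_apply]
  have hm := measurableSet_Ici (a := (0 : ℝ))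
  have main := second_moment_convolution g (h0.integrable_indicator hm)
    (i1 ▸ h1.integrable_indicator hm) (i2 ▸ h2.integrable_indicator hm)
  rw [i1, i2, integral_indicator hm, integral_indicator hm, hg, integral_indicator hm, ← hg]
    at main
  have cv := Measure.integral_comp_mul_left (fun z : ℝ => z ^ 2 * ∫ y, g y * g (z - y)) 2
  rw [main] at cv
  have e : (Set.Ici (0 : ℝ)).indicator
      (fun x => x ^ 2 * (2 * ∫ y in (0 : ℝ)..(2 * x), f y * f (2 * x - y))) =
      fun x => (1 / 2) * ((2 * x) ^ 2 * ∫ y, g y * g (2 * x - y)) := by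
    ext x
    by_cases hx : 0 ≤ x
    · rw [Set.indicator_of_mem (Set.mem_Ici.2 hx), hg,
        integral_indicator_mul_indicator f (by linarith : 0 ≤ 2 * x)]
      ring
    · rw [Set.indicator_of_notMem (by simpa using hx), hg,
        integral_indicator_mul_indicator_of_neg f (by linarith : 2 * x < 0)]
      ring
  rw [← integral_indicator hm, e, integral_const_mul, cv, abs_of_pos (by norm_num), smul_eq_mul]
  ring

/-- For a classical solution `ρ(t,x)` of
`∂ₜ ρ(t,x) = 2(ρ(t)*ρ(t))(2x) - ρ(t,x)` on `t ≥ 0`, `x ≥ 0`, with `ρ(0,·)` a probability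
density on `[0,∞)` with mean `μ > 0` and finite variance, the variance
`V(t) = ∫ x² ρ(t,x) dx - μ²` satisfies `V(t) = V(0) e^{-t/2}`. -/
theorem variance_decay (ρ : ℝ → ℝ → ℝ) (μ : ℝ) (hμ : 0 < μ)
    (hnonneg : ∀ t ≥ (0:ℝ), ∀ x ≥ (0:ℝ), 0 ≤ ρ t x)
    (hPDE : ∀ t ≥ (0:ℝ), ∀ x ≥ (0:ℝ), HasDerivAt (fun s => ρ s x)
      (2 * (∫ y in (0:ℝ)..(2*x), ρ t y * ρ t (2*x - y)) - ρ t x) t)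
    (hmass : ∀ t ≥ (0:ℝ), ∫ x in Set.Ici (0:ℝ), ρ t x = 1)
    (hmean : ∀ t ≥ (0:ℝ), ∫ x in Set.Ici (0:ℝ), x * ρ t x = μ)
    (hint : ∀ t ≥ (0:ℝ), IntegrableOn (fun x => x^2 * ρ t x) (Set.Ici 0))
    (hint2 : ∀ t ≥ (0:ℝ), IntegrableOn
      (fun x => x^2 * (2 * ∫ y in (0:ℝ)..(2*x), ρ t y * ρ t (2*x - y))) (Set.Ici 0))
    (hdiff : ∀ t ≥ (0:ℝ), HasDerivAt (fun s => ∫ x in Set.Ici (0:ℝ), x^2 * ρ s x)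
      (∫ x in Set.Ici (0:ℝ),
        x^2 * (2 * (∫ y in (0:ℝ)..(2*x), ρ t y * ρ t (2*x - y)) - ρ t x)) t) :
    ∀ t ≥ (0:ℝ),
      (∫ x in Set.Ici (0:ℝ), x^2 * ρ t x) - μ^2 =
        ((∫ x in Set.Ici (0:ℝ), x^2 * ρ 0 x) - μ^2) * Real.exp (-(1/2) * t) := by
  have hder : ∀ t ≥ (0:ℝ), HasDerivAt (fun s => ∫ x in Set.Ici (0:ℝ), x^2 * ρ s x)
      (-(1/2) * ((∫ x in Set.Ici (0:ℝ), x^2 * ρ t x) - μ^2)) t := by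
    intro t ht
    have h0 : IntegrableOn (ρ t) (Set.Ici 0) :=
      Integrable.of_integral_ne_zero (by rw [hmass t ht]; exact one_ne_zero)
    have h1 : IntegrableOn (fun x => x * ρ t x) (Set.Ici 0) :=
      Integrable.of_integral_ne_zero (by rw [hmean t ht]; exact hμ.ne')
    convert hdiff t ht using 1
    simp_rw [mul_sub]
    rw [integral_sub (hint2 t ht) (hint t ht), second_moment_gain (ρ t) h0 h1 (hint t ht),
      hmass t ht, hmean t ht]
    ring
  intro t ht
  have hc : ∀ s ≥ (0:ℝ), HasDerivAt
      (fun s => ((∫ x in Set.Ici (0:ℝ), x^2 * ρ s x) - μ^2) * Real.exp ((1/2) * s)) 0 s := by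
    intro s hs
    have he : HasDerivAt (fun s : ℝ => Real.exp ((1/2) * s)) (Real.exp ((1/2) * s) * (1/2)) s := by
      simpa using ((hasDerivAt_id s).const_mul (1/2 : ℝ)).exp
    exact (((hder s hs).sub_const (μ^2)).mul he).congr_deriv (by ring)
  have hk := constant_of_has_deriv_right_zero (a := 0) (b := t)
    (fun s hs => (hc s hs.1).continuousAt.continuousWithinAt)
    (fun s hs => (hc s hs.1).hasDerivWithinAt) t ⟨ht, le_rfl⟩
  simp only [mul_zero, Real.exp_zero, mul_one] at hk
  rw [← hk, mul_assoc, ← Real.exp_add]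
  simp
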